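/- arXiv:0807.0558 — 6 statements merged into one kernel-verified Lean document; each statement's English description precedes it below -/
import Mathlib

section
/- Assume the slope condition: F : ℝ → ℝ, an interval I = [T_min, T_max] with 0 < T_min, a point T* ∈ (T_min, T_max) with F(T*) = 0, and constants 0 < α ≤ a such that α ≤ (F(T) − F(T*))/(T − T*) ≤ a for all T ∈ I with T ≠ T*. Let γ > 0 and let T : [0, ∞) → ℝ be differentiable with T'(t) = −γ F(T(t)) for all t ≥ 0 and T(0) ∈ I. Then T(t) ∈ I for all t ≥ 0, and for all t ≥ 0 one has (d/dt)[(1/2)(T(t) − T*)²] ≤ −γα (T(t) − T*)²; in particular t ↦ (T(t) − T*)² is nonincreasing. -/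
/-! The slope condition gives `α (x - T*)² ≤ F x (x - T*)` on `I`, so the field `-γ F` points strictly
into `I` at both endpoints. A differentiable trajectory can therefore not cross an endpoint (Mathlib's
comparison lemma `image_le_of_deriv_right_lt_deriv_boundary'` with a constant barrier, which needs no
information on `F` outside `I` and no regularity of `F`). Once the trajectory is known to stay in `I`,
the derivative of `(1/2)(T - T*)²` is `-γ F(T) (T - T*) ≤ -γα (T - T*)² ≤ 0`. -/

/-- The first-order barrier principle: a trajectory starting below the level `M` stays below it if its
velocity is negative whenever it is at that level. -/
lemma le_of_deriv_neg_at_level (f f' : ℝ → ℝ) (M : ℝ)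
    (hf : ∀ t ≥ (0 : ℝ), HasDerivAt f (f' t) t) (h0 : f 0 ≤ M)
    (hM : ∀ t, f t = M → f' t < 0) (t : ℝ) (ht : 0 ≤ t) : f t ≤ M :=
  image_le_of_deriv_right_lt_deriv_boundary' (a := 0) (b := t) (B := fun _ => M) (B' := fun _ => 0)
    (fun x hx => (hf x hx.1).continuousAt.continuousWithinAt)
    (fun x hx => (hf x hx.1).hasDerivWithinAt) h0 continuousOn_const
    (fun x _ => hasDerivWithinAt_const x _ M) (fun x _ h => hM x h) ⟨ht, le_rfl⟩

/-- Under the slope condition on `F` around `T* ∈ (T_min, T_max)`, a solution of the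
feedback dynamics `T'(t) = -γ F(T(t))` starting in `I = [T_min, T_max]` stays in `I`,
the derivative of `(1/2)(T(t)-T*)²` is at most `-γα (T(t)-T*)²`, and `t ↦ (T(t)-T*)²`
is nonincreasing. -/
theorem feedback_dynamics_lyapunov
    (F : ℝ → ℝ) (Tmin Tmax Tstar α a γ : ℝ)
    (hTmin : 0 < Tmin) (h1 : Tmin < Tstar) (h2 : Tstar < Tmax)
    (hF0 : F Tstar = 0) (hα : 0 < α) (hαa : α ≤ a)
    (hslope : ∀ T ∈ Set.Icc Tmin Tmax, T ≠ Tstar →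
      α ≤ (F T - F Tstar) / (T - Tstar) ∧ (F T - F Tstar) / (T - Tstar) ≤ a)
    (hγ : 0 < γ)
    (T : ℝ → ℝ)
    (hT : ∀ t ≥ (0 : ℝ), HasDerivAt T (-γ * F (T t)) t)
    (hT0 : T 0 ∈ Set.Icc Tmin Tmax) :
    (∀ t ≥ (0 : ℝ), T t ∈ Set.Icc Tmin Tmax) ∧
    (∀ t ≥ (0 : ℝ),
      deriv (fun u => (1 / 2) * (T u - Tstar) ^ 2) t ≤ -(γ * α) * (T t - Tstar) ^ 2) ∧
    (∀ s t : ℝ, 0 ≤ s → s ≤ t → (T t - Tstar) ^ 2 ≤ (T s - Tstar) ^ 2) := by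
  have key : ∀ x ∈ Set.Icc Tmin Tmax, α * (x - Tstar) ^ 2 ≤ F x * (x - Tstar) := by
    intro x hx
    rcases eq_or_ne x Tstar with rfl | hne
    · simp
    · have h := (hslope x hx hne).1
      rw [hF0, sub_zero] at h
      have hx0 : x - Tstar ≠ 0 := sub_ne_zero.mpr hne
      calc α * (x - Tstar) ^ 2 ≤ F x / (x - Tstar) * (x - Tstar) ^ 2 := by gcongr
        _ = F x * (x - Tstar) := by field_simp
  have hFmax : 0 < F Tmax := by
    have h := key Tmax ⟨by linarith, le_rfl⟩
    have hd : 0 < Tmax - Tstar := by linarith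
    exact pos_of_mul_pos_left (lt_of_lt_of_le (by positivity) h) hd.le
  have hFmin : F Tmin < 0 := by
    have h := key Tmin ⟨le_rfl, by linarith⟩
    have hd : 0 < Tstar - Tmin := by linarith
    have hp : 0 < α * (Tstar - Tmin) ^ 2 := by positivity
    by_contra! hc
    nlinarith [mul_nonneg hc hd.le]
  have hI : ∀ t ≥ (0 : ℝ), T t ∈ Set.Icc Tmin Tmax := by
    intro t ht
    constructor
    · refine neg_le_neg_iff.mp (le_of_deriv_neg_at_level (fun u => -T u)
        (fun u => -(-γ * F (T u))) (-Tmin) (fun u hu => (hT u hu).neg)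
        (neg_le_neg hT0.1) (fun u hu => ?_) t ht)
      rw [neg_inj.mp hu]
      nlinarith
    · refine le_of_deriv_neg_at_level T (fun u => -γ * F (T u)) Tmax hT hT0.2
        (fun u hu => ?_) t ht
      rw [hu]
      nlinarith
  have hD : ∀ t ≥ (0 : ℝ), HasDerivAt (fun u => (1 / 2) * (T u - Tstar) ^ 2)
      (-γ * (F (T t) * (T t - Tstar))) t := by
    intro t ht
    refine ((((hT t ht).sub_const Tstar).pow 2).const_mul (1 / 2 : ℝ)).congr_deriv ?_
    push_cast
    ring
  have hle : ∀ t ≥ (0 : ℝ),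
      deriv (fun u => (1 / 2) * (T u - Tstar) ^ 2) t ≤ -(γ * α) * (T t - Tstar) ^ 2 := by
    intro t ht
    rw [(hD t ht).deriv]
    nlinarith [mul_le_mul_of_nonneg_left (key (T t) (hI t ht)) hγ.le]
  refine ⟨hI, hle, fun s t hs hst => ?_⟩
  have hanti : AntitoneOn (fun u => (1 / 2) * (T u - Tstar) ^ 2) (Set.Ici 0) := by
    refine antitoneOn_of_deriv_nonpos (convex_Ici 0)
      (fun u hu => (hD u hu).continuousAt.continuousWithinAt)
      (fun u hu => (hD u (interior_subset hu)).differentiableAt.differentiableWithinAt)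
      (fun u hu => (hle u (interior_subset hu)).trans ?_)
    have : 0 ≤ γ * α * (T u - Tstar) ^ 2 := by positivity
    linarith
  have h : (1 / 2) * (T t - Tstar) ^ 2 ≤ (1 / 2) * (T s - Tstar) ^ 2 :=
    hanti hs (hs.trans hst : (0 : ℝ) ≤ t) hst
  linarith
end

section
/- Assume the slope condition: F : ℝ → ℝ, an interval I = [T_min, T_max] with 0 < T_min, a point T* ∈ (T_min, T_max) with F(T*) = 0, and constants 0 < α ≤ a such that α ≤ (F(T) − F(T*))/(T − T*) ≤ a for all T ∈ I with T ≠ T*. Let γ > 0 and let T : [0, ∞) → ℝ be differentiable with T'(t) = −γ F(T(t)) for all t ≥ 0 and T(0) ∈ I with T(0) > T*. Then T(t) ≥ T* for all t ≥ 0 and, for all t ≥ 0, T* + (T(0) − T*)·exp(−aγt) ≤ T(t) ≤ T* + (T(0) − T*)·exp(−αγt). -/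
/-!
The comparison curves `B_b(t) = T* + (T(0) - T*) exp(-bγt)` serve as fences. Wherever `T` meets
`B_b` with `b > 0`, the common value lies in `(T*, T(0)] ⊆ I`, so the slope condition applies there
and gives `-γa(T - T*) ≤ T' ≤ -γα(T - T*)`, while `B_b' = -γb(T - T*)`. For `b < α` the
solution therefore meets `B_b` only with `T' < B_b'` and stays below it; for `b > a` it stays above.
Letting `b → α⁻` and `b → a⁺` gives the two bounds. The strict fencing lemma
`image_le_of_deriv_right_lt_deriv_boundary'` needs information only at contact points, so `F` need
not be controlled outside `I`, nor be continuous.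
-/

/-- The exponential fence with rate `b` solves `B' = -γb(B - T*)`. -/
lemma hasDerivAt_fence (s d b γ t : ℝ) :
    HasDerivAt (fun t => s + d * Real.exp (-(b * γ * t)))
      (-γ * (b * (d * Real.exp (-(b * γ * t))))) t := by
  have h : HasDerivAt (fun t : ℝ => -(b * γ * t)) (-(b * γ)) t :=
    ((hasDerivAt_id t).const_mul (b * γ)).neg.congr_deriv (by simp)
  exact ((h.exp.const_mul d).const_add s).congr_deriv (by ring)

/-- Under the slope condition, a solution of `T'(t) = -γ F(T(t))` starting in `I` above
`T*` stays above `T*` and satisfies the two-sided exponential bound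
`T* + (T(0)-T*) e^{-aγt} ≤ T(t) ≤ T* + (T(0)-T*) e^{-αγt}`. -/
theorem feedback_dynamics_two_sided_exponential_bound
    (F : ℝ → ℝ) (Tmin Tmax Tstar α a γ : ℝ)
    (hTmin : 0 < Tmin) (h1 : Tmin < Tstar) (h2 : Tstar < Tmax)
    (hF0 : F Tstar = 0) (hα : 0 < α) (hαa : α ≤ a)
    (hslope : ∀ T ∈ Set.Icc Tmin Tmax, T ≠ Tstar →
      α ≤ (F T - F Tstar) / (T - Tstar) ∧ (F T - F Tstar) / (T - Tstar) ≤ a)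
    (hγ : 0 < γ)
    (T : ℝ → ℝ)
    (hT : ∀ t ≥ (0 : ℝ), HasDerivAt T (-γ * F (T t)) t)
    (hT0 : T 0 ∈ Set.Icc Tmin Tmax) (hT0' : Tstar < T 0) :
    ∀ t ≥ (0 : ℝ),
      Tstar ≤ T t ∧
      Tstar + (T 0 - Tstar) * Real.exp (-(a * γ * t)) ≤ T t ∧
      T t ≤ Tstar + (T 0 - Tstar) * Real.exp (-(α * γ * t)) := by
  have hd : 0 < T 0 - Tstar := by linarith only [hT0']
  have hcontT : ∀ t, ContinuousOn T (Set.Icc 0 t) := fun t x hx =>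
    (hT x hx.1).continuousAt.continuousWithinAt
  -- Every point of a fence with positive rate lies in `(T*, T(0)]`, where the slope bound holds.
  have key : ∀ b > 0, ∀ x ≥ (0 : ℝ), ∀ e : ℝ, e = (T 0 - Tstar) * Real.exp (-(b * γ * x)) →
      0 < e ∧ α * e ≤ F (Tstar + e) ∧ F (Tstar + e) ≤ a * e := by
    intro b hb x hx e he
    have he0 : 0 < e := by rw [he]; positivity
    have hexp : Real.exp (-(b * γ * x)) ≤ 1 := by
      rw [Real.exp_le_one_iff]
      have : 0 ≤ b * γ * x := by positivity
      linarith
    have he1 : e ≤ T 0 - Tstar := by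
      rw [he]
      exact mul_le_of_le_one_right hd.le hexp
    obtain ⟨hl, hu⟩ := hslope (Tstar + e) ⟨by linarith, by linarith [hT0.2]⟩ (by linarith)
    rw [hF0, sub_zero, add_sub_cancel_left] at hl hu
    exact ⟨he0, (le_div_iff₀ he0).1 hl, (div_le_iff₀ he0).1 hu⟩
  have upper : ∀ b > 0, b < α → ∀ t ≥ (0 : ℝ),
      T t ≤ Tstar + (T 0 - Tstar) * Real.exp (-(b * γ * t)) := by
    intro b hb hbα t ht
    refine image_le_of_deriv_right_lt_deriv_boundary' (a := 0) (b := t) (hcontT t)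
      (fun x hx => (hT x hx.1).hasDerivWithinAt) (by simp)
      (fun x _ => (hasDerivAt_fence Tstar _ b γ x).continuousAt.continuousWithinAt)
      (fun x _ => (hasDerivAt_fence Tstar _ b γ x).hasDerivWithinAt) ?_ ⟨ht, le_rfl⟩
    intro x hx hxe
    obtain ⟨he, hl, -⟩ := key b hb x hx.1 _ rfl
    rw [hxe]
    have := mul_lt_mul_of_pos_right hbα he
    exact mul_lt_mul_of_neg_left (by linarith) (by linarith)
  have lower : ∀ b > a, ∀ t ≥ (0 : ℝ),
      Tstar + (T 0 - Tstar) * Real.exp (-(b * γ * t)) ≤ T t := by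
    intro b hb t ht
    refine image_le_of_deriv_right_lt_deriv_boundary' (a := 0) (b := t)
      (fun x _ => (hasDerivAt_fence Tstar _ b γ x).continuousAt.continuousWithinAt)
      (fun x _ => (hasDerivAt_fence Tstar _ b γ x).hasDerivWithinAt) (by simp) (hcontT t)
      (fun x hx => (hT x hx.1).hasDerivWithinAt) ?_ ⟨ht, le_rfl⟩
    intro x hx hxe
    obtain ⟨he, -, hu⟩ := key b (by linarith) x hx.1 _ rfl
    rw [← hxe]
    have := mul_lt_mul_of_pos_right hb he
    exact mul_lt_mul_of_neg_left (by linarith) (by linarith)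
  intro t ht
  have hcont : Continuous fun b : ℝ => Tstar + (T 0 - Tstar) * Real.exp (-(b * γ * t)) := by
    fun_prop
  have hlow : Tstar + (T 0 - Tstar) * Real.exp (-(a * γ * t)) ≤ T t :=
    le_of_tendsto (hcont.continuousAt.tendsto.mono_left (nhdsWithin_le_nhds (s := Set.Ioi a)))
      (Filter.eventually_of_mem self_mem_nhdsWithin fun b hb => lower b hb t ht)
  refine ⟨?_, hlow, ?_⟩
  · have : 0 < (T 0 - Tstar) * Real.exp (-(a * γ * t)) := by positivity
    linarith
  · exact ge_of_tendsto
      (hcont.continuousAt.tendsto.mono_left (nhdsWithin_le_nhds (s := Set.Iio α)))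
      (Filter.eventually_of_mem (Ioo_mem_nhdsLT hα) fun b hb => upper b hb.1 hb.2 t ht)
end

section
/- Assume the slope condition: F : ℝ → ℝ, an interval I = [T_min, T_max] with 0 < T_min, a point T* ∈ (T_min, T_max) with F(T*) = 0, and constants 0 < α ≤ a such that α ≤ (F(T) − F(T*))/(T − T*) ≤ a for all T ∈ I with T ≠ T*. Let γ > 0 and let T : [0, ∞) → ℝ be differentiable with T'(t) = −γ F(T(t)) for all t ≥ 0 and T(0) ∈ I. Then |T(t) − T*| ≤ |T(0) − T*|·exp(−αγt) for all t ≥ 0; in particular T(t) converges to T* as t → ∞. -/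
/-!
Write `x = T - Tstar`. The slope condition says that `x F(T) ≥ α x²` on `[Tmin, Tmax]`, so `F` is
positive at `Tmax` and negative at `Tmin`. Hence the vector field `-γ F` points strictly inwards at
both endpoints and a solution starting in the interval never leaves it (`solution_mem_Icc`).
Along the solution the Lyapunov function `x(t)² e^{2αγt}` has derivative
`2 γ e^{2αγt} (α x² - x F(T)) ≤ 0`, so it is bounded by its initial value; taking square roots gives
the exponential bound.
-/

/-- A solution of `T' = v(T)` starting below a level `M` at which `v` is negative stays below it. -/
lemma solution_le_of_neg {v T : ℝ → ℝ} {M : ℝ} (hT : ∀ t ≥ (0 : ℝ), HasDerivAt T (v (T t)) t)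
    (h0 : T 0 ≤ M) (hv : v M < 0) {t : ℝ} (ht : 0 ≤ t) : T t ≤ M := by
  refine image_le_of_deriv_right_lt_deriv_boundary (f := T) (f' := fun s => v (T s)) (a := 0)
    (b := t) (B := fun _ => M) (B' := fun _ => 0)
    (fun s hs => (hT s hs.1).continuousAt.continuousWithinAt)
    (fun s hs => (hT s hs.1).hasDerivWithinAt) h0 (fun s => hasDerivAt_const s M) ?_ ⟨ht, le_rfl⟩
  intro s _ h
  simpa only [h] using hv

/-- A solution of `T' = v(T)` cannot leave an interval at whose endpoints `v` points inwards. -/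
lemma solution_mem_Icc {v T : ℝ → ℝ} {m M : ℝ} (hT : ∀ t ≥ (0 : ℝ), HasDerivAt T (v (T t)) t)
    (h0 : T 0 ∈ Set.Icc m M) (hm : 0 < v m) (hM : v M < 0) {t : ℝ} (ht : 0 ≤ t) :
    T t ∈ Set.Icc m M := by
  refine ⟨?_, solution_le_of_neg hT h0.2 hM ht⟩
  -- The lower bound is the upper bound for the reflected solution `-T`.
  have h := solution_le_of_neg (v := fun x => -v (-x)) (T := fun s => -T s) (M := -m)
    (fun s hs => by simpa only [neg_neg] using (hT s hs).fun_neg) (by simpa using h0.1) (by simpa using hm) ht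
  simpa using h

/-- Under the slope condition, a solution of `T'(t) = -γ F(T(t))` starting in `I`
converges exponentially to `T*`: `|T(t) - T*| ≤ |T(0) - T*| e^{-αγt}`, and in
particular `T(t) → T*` as `t → ∞`. -/
theorem feedback_dynamics_exponential_convergence
    (F : ℝ → ℝ) (Tmin Tmax Tstar α a γ : ℝ)
    (hTmin : 0 < Tmin) (h1 : Tmin < Tstar) (h2 : Tstar < Tmax)
    (hF0 : F Tstar = 0) (hα : 0 < α) (hαa : α ≤ a)
    (hslope : ∀ T ∈ Set.Icc Tmin Tmax, T ≠ Tstar →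
      α ≤ (F T - F Tstar) / (T - Tstar) ∧ (F T - F Tstar) / (T - Tstar) ≤ a)
    (hγ : 0 < γ)
    (T : ℝ → ℝ)
    (hT : ∀ t ≥ (0 : ℝ), HasDerivAt T (-γ * F (T t)) t)
    (hT0 : T 0 ∈ Set.Icc Tmin Tmax) :
    (∀ t ≥ (0 : ℝ), |T t - Tstar| ≤ |T 0 - Tstar| * Real.exp (-(α * γ * t))) ∧
    Filter.Tendsto T Filter.atTop (nhds Tstar) := by
  have key : ∀ x ∈ Set.Icc Tmin Tmax, α * (x - Tstar) ^ 2 ≤ (x - Tstar) * F x := by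
    intro x hx
    by_cases hne : x = Tstar
    · simp [hne]
    have hd : x - Tstar ≠ 0 := sub_ne_zero.2 hne
    have h := mul_le_mul_of_nonneg_right (hslope x hx hne).1 (sq_nonneg (x - Tstar))
    have e : (F x - F Tstar) / (x - Tstar) * (x - Tstar) ^ 2 = (x - Tstar) * F x := by
      rw [hF0]; field_simp; ring
    rwa [e] at h
  have hFmax : 0 < F Tmax := by
    have h := key Tmax ⟨by linarith, le_rfl⟩
    have hp : 0 < Tmax - Tstar := by linarith
    exact pos_of_mul_pos_right (lt_of_lt_of_le (by positivity) h) hp.le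
  have hFmin : F Tmin < 0 := by
    have h := key Tmin ⟨le_rfl, by linarith⟩
    have hp : Tmin - Tstar < 0 := by linarith
    have h' : 0 < α * (Tmin - Tstar) ^ 2 := mul_pos hα (sq_pos_of_neg hp)
    nlinarith
  have hmem : ∀ t ≥ (0 : ℝ), T t ∈ Set.Icc Tmin Tmax := fun t ht =>
    solution_mem_Icc (v := fun x => -γ * F x) hT hT0 (by nlinarith) (by nlinarith) ht
  set V : ℝ → ℝ := fun t => ((T t - Tstar) * Real.exp (α * γ * t)) ^ 2 with hV
  have hVd : ∀ t ≥ (0 : ℝ), HasDerivAt V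
      (2 * γ * Real.exp (α * γ * t) ^ 2 * (α * (T t - Tstar) ^ 2 - (T t - Tstar) * F (T t))) t := by
    intro t ht
    have he : HasDerivAt (fun s => Real.exp (α * γ * s)) (Real.exp (α * γ * t) * (α * γ)) t := by
      simpa using ((hasDerivAt_id t).const_mul (α * γ)).exp
    refine HasDerivAt.congr_deriv ((((hT t ht).sub_const Tstar).fun_mul he).fun_pow 2) ?_
    push_cast
    ring
  have hanti : AntitoneOn V (Set.Ici 0) := by
    refine antitoneOn_of_hasDerivWithinAt_nonpos (convex_Ici 0)
      (fun t ht => (hVd t ht).continuousAt.continuousWithinAt)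
      (fun t ht => (hVd t (interior_subset ht)).hasDerivWithinAt) ?_
    intro t ht
    exact mul_nonpos_of_nonneg_of_nonpos (by positivity)
      (sub_nonpos.2 (key _ (hmem t (interior_subset ht))))
  have bound : ∀ t ≥ (0 : ℝ), |T t - Tstar| ≤ |T 0 - Tstar| * Real.exp (-(α * γ * t)) := by
    intro t ht
    have h := sq_le_sq.1 (hanti Set.self_mem_Ici ht ht)
    rw [mul_zero, Real.exp_zero, mul_one, abs_mul, Real.abs_exp] at h
    rwa [Real.exp_neg, ← div_eq_mul_inv, le_div_iff₀ (Real.exp_pos _)]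
  refine ⟨bound, ?_⟩
  rw [tendsto_iff_dist_tendsto_zero]
  have hlim : Filter.Tendsto (fun t => |T 0 - Tstar| * Real.exp (-(α * γ * t)))
      Filter.atTop (nhds 0) := by
    simpa using (Real.tendsto_exp_neg_atTop_nhds_zero.comp
      (Filter.tendsto_id.const_mul_atTop (mul_pos hα hγ))).const_mul |T 0 - Tstar|
  refine squeeze_zero' (Filter.Eventually.of_forall fun _ => dist_nonneg) ?_ hlim
  filter_upwards [Filter.eventually_ge_atTop (0 : ℝ)] with t ht
  simpa only [Real.dist_eq] using bound t ht
end

section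
/- Assume the slope condition: F : ℝ → ℝ, an interval I = [T_min, T_max] with 0 < T_min, a point T* ∈ (T_min, T_max) with F(T*) = 0, and constants 0 < α ≤ a such that α ≤ (F(T) − F(T*))/(T − T*) ≤ a for all T ∈ I with T ≠ T*. Let R ≥ sup_{T ∈ I} |F(T)|, and let f : ℝ → ℝ satisfy f(0) = 0 and c₁ ≤ f(x)/x ≤ c₂ for all x ∈ [−R, R] with x ≠ 0, for some constants c₁, c₂ > 0. Let γ > 0 and let T : [0, ∞) → ℝ be differentiable with T'(t) = −γ f(F(T(t))) for all t ≥ 0 and T(0) ∈ I. Then T(t) ∈ I for all t ≥ 0 and |T(t) − T*| ≤ |T(0) − T*|·exp(−c₁ α γ t) for all t ≥ 0. -/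
/-! The deviations `T - Tstar` and `Tstar - T` each solve a scalar equation `u' = -G u` in which
`k * y ≤ G y` on `(0, b]`, with `k = c₁ * α * γ` and `b` the distance from `Tstar` to the
corresponding endpoint of the interval. For such a `u` with `u 0 ≤ b`, the curve `M * exp (-(k' * t))`
with `0 ≤ k' < k` and `0 < M ≤ b` is a strict upper barrier: it stays in `(0, b]`, and whenever `u`
touches it, `u` decreases strictly faster (`le_barrier`). Letting `k' → k` and `M → max (u 0) 0`
gives `u t ≤ max (u 0) 0 * exp (-(k * t))` (`le_exp_decay`), which yields both the invariance of
the interval and the exponential decay. Working one side at a time matters, since the interval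
need not be symmetric about `Tstar`. -/

open Set Filter Topology

/-- Strict barrier for one-sided decay: nothing is assumed of `G` outside `(0, b]`, because the
derivatives are compared only where `u` touches the barrier. -/
lemma le_barrier {u G : ℝ → ℝ} {k k' b M : ℝ} (hk' : 0 ≤ k') (hkk : k' < k)
    (hG : ∀ y, 0 < y → y ≤ b → k * y ≤ G y)
    (hu : ∀ t ≥ (0 : ℝ), HasDerivAt u (-G (u t)) t)
    (hM : 0 < M) (hMb : M ≤ b) (h0 : u 0 ≤ M) {t : ℝ} (ht : 0 ≤ t) :
    u t ≤ M * Real.exp (-(k' * t)) := by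
  refine image_le_of_deriv_right_lt_deriv_boundary (f := u) (f' := fun s => -G (u s)) (a := 0)
    (b := t) (B := fun s => M * Real.exp (-(k' * s)))
    (B' := fun s => M * (Real.exp (-(k' * s)) * (-(k' * 1))))
    (fun s hs => (hu s hs.1).continuousAt.continuousWithinAt)
    (fun s hs => (hu s hs.1).hasDerivWithinAt) (by simpa using h0)
    (fun s => ((((hasDerivAt_id s).const_mul k').neg).exp).const_mul M) ?_ ⟨ht, le_rfl⟩
  intro s hs hus
  have hpos : 0 < M * Real.exp (-(k' * s)) := by positivity
  have hle : M * Real.exp (-(k' * s)) ≤ b := by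
    have : Real.exp (-(k' * s)) ≤ 1 :=
      Real.exp_le_one_iff.mpr (neg_nonpos.mpr (mul_nonneg hk' hs.1))
    exact (mul_le_of_le_one_right hM.le this).trans hMb
  have h := hG _ hpos hle
  have h' := mul_lt_mul_of_pos_right hkk hpos
  simp only [hus]
  linarith

/-- One-sided exponential decay, obtained from `le_barrier` by letting the rate tend to `k` and the
amplitude to `max (u 0) 0`. -/
lemma le_exp_decay {u G : ℝ → ℝ} {k b : ℝ} (hk : 0 < k) (hb : 0 < b)
    (hG : ∀ y, 0 < y → y ≤ b → k * y ≤ G y)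
    (hu : ∀ t ≥ (0 : ℝ), HasDerivAt u (-G (u t)) t)
    (h0 : u 0 ≤ b) {t : ℝ} (ht : 0 ≤ t) :
    u t ≤ max (u 0) 0 * Real.exp (-(k * t)) := by
  have key : ∀ M, 0 < M → M ≤ b → u 0 ≤ M → u t ≤ M * Real.exp (-(k * t)) := by
    intro M hM hMb hM0
    have hc : Continuous fun k' : ℝ => M * Real.exp (-(k' * t)) := by fun_prop
    refine ge_of_tendsto ((hc.tendsto k).mono_left (nhdsWithin_le_nhds (s := Iio k))) ?_
    filter_upwards [Ioo_mem_nhdsLT hk] with k' hk'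
    exact le_barrier hk'.1.le hk'.2 hG hu hM hMb hM0 ht
  rcases lt_or_ge 0 (u 0) with h | h
  · rw [max_eq_left h.le]
    exact key _ h h0 le_rfl
  · rw [max_eq_right h]
    have hc : Continuous fun M : ℝ => M * Real.exp (-(k * t)) := by fun_prop
    refine ge_of_tendsto ((hc.tendsto 0).mono_left (nhdsWithin_le_nhds (s := Ioi 0))) ?_
    filter_upwards [Ioo_mem_nhdsGT hb] with M hM
    exact key M hM.1 hM.2.le (h.trans hM.1.le)

/-- Nonlinear temperature feedback: under the slope condition on `F`, if `f` satisfies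
`f(0) = 0` and `c₁ ≤ f(x)/x ≤ c₂` on `[-R, R] \ {0}` where `R` bounds `|F|` on `I`,
then a solution of `T'(t) = -γ f(F(T(t)))` starting in `I` stays in `I` and satisfies
`|T(t) - T*| ≤ |T(0) - T*| e^{-c₁αγt}`. -/
theorem nonlinear_feedback_dynamics_convergence
    (F : ℝ → ℝ) (Tmin Tmax Tstar α a γ : ℝ)
    (hTmin : 0 < Tmin) (h1 : Tmin < Tstar) (h2 : Tstar < Tmax)
    (hF0 : F Tstar = 0) (hα : 0 < α) (hαa : α ≤ a)
    (hslope : ∀ T ∈ Set.Icc Tmin Tmax, T ≠ Tstar →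
      α ≤ (F T - F Tstar) / (T - Tstar) ∧ (F T - F Tstar) / (T - Tstar) ≤ a)
    (R : ℝ) (hR : ∀ T ∈ Set.Icc Tmin Tmax, |F T| ≤ R)
    (f : ℝ → ℝ) (c₁ c₂ : ℝ) (hc₁ : 0 < c₁) (hc₂ : 0 < c₂)
    (hf0 : f 0 = 0)
    (hf : ∀ x ∈ Set.Icc (-R) R, x ≠ 0 → c₁ ≤ f x / x ∧ f x / x ≤ c₂)
    (hγ : 0 < γ)
    (T : ℝ → ℝ)
    (hT : ∀ t ≥ (0 : ℝ), HasDerivAt T (-γ * f (F (T t))) t)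
    (hT0 : T 0 ∈ Set.Icc Tmin Tmax) :
    ∀ t ≥ (0 : ℝ),
      T t ∈ Set.Icc Tmin Tmax ∧
      |T t - Tstar| ≤ |T 0 - Tstar| * Real.exp (-(c₁ * α * γ * t)) := by
  intro t ht
  have hk : 0 < c₁ * α * γ := by positivity
  have hfF : ∀ x ∈ Set.Icc Tmin Tmax, F x ≠ 0 → c₁ ≤ f (F x) / F x := fun x hx hne =>
    (hf (F x) (Set.mem_Icc.mpr (abs_le.mp (hR x hx))) hne).1
  have up := le_exp_decay (u := fun s => T s - Tstar) (G := fun y => γ * f (F (Tstar + y)))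
    (b := Tmax - Tstar) hk (sub_pos.mpr h2)
    (by
      intro y hy hyb
      have hmem : Tstar + y ∈ Set.Icc Tmin Tmax := ⟨by linarith, by linarith⟩
      have hs := (hslope _ hmem (by linarith)).1
      rw [hF0, sub_zero, add_sub_cancel_left, le_div_iff₀ hy] at hs
      have hF : 0 < F (Tstar + y) := (mul_pos hα hy).trans_le hs
      have hf1 := hfF _ hmem hF.ne'
      rw [le_div_iff₀ hF] at hf1
      calc c₁ * α * γ * y = γ * (c₁ * (α * y)) := by ring
        _ ≤ γ * (c₁ * F (Tstar + y)) := by gcongr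
        _ ≤ γ * f (F (Tstar + y)) := by gcongr)
    (by
      intro s hs
      simpa using (hT s hs).sub_const Tstar)
    (by linarith [hT0.2]) ht
  have lo := le_exp_decay (u := fun s => Tstar - T s) (G := fun y => -(γ * f (F (Tstar - y))))
    (b := Tstar - Tmin) hk (sub_pos.mpr h1)
    (by
      intro y hy hyb
      have hmem : Tstar - y ∈ Set.Icc Tmin Tmax := ⟨by linarith, by linarith⟩
      have hs := (hslope _ hmem (by linarith)).1
      have hyy : Tstar - y - Tstar = -y := by ring
      rw [hF0, sub_zero, hyy, div_neg, ← neg_div, le_div_iff₀ hy] at hs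
      have hF : 0 < -F (Tstar - y) := (mul_pos hα hy).trans_le hs
      have hf1 := hfF _ hmem (by linarith)
      rw [← neg_div_neg_eq, le_div_iff₀ hF] at hf1
      calc c₁ * α * γ * y = γ * (c₁ * (α * y)) := by ring
        _ ≤ γ * (c₁ * -F (Tstar - y)) := by gcongr
        _ ≤ γ * -f (F (Tstar - y)) := by gcongr
        _ = -(γ * f (F (Tstar - y))) := by ring)
    (by
      intro s hs
      simpa using (hT s hs).const_sub Tstar)
    (by linarith [hT0.1]) ht
  have he : 0 < Real.exp (-(c₁ * α * γ * t)) := Real.exp_pos _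
  have he1 : Real.exp (-(c₁ * α * γ * t)) ≤ 1 :=
    Real.exp_le_one_iff.mpr (neg_nonpos.mpr (mul_nonneg hk.le ht))
  have up1 : max (T 0 - Tstar) 0 ≤ Tmax - Tstar :=
    max_le (by linarith [hT0.2]) (by linarith)
  have lo1 : max (Tstar - T 0) 0 ≤ Tstar - Tmin :=
    max_le (by linarith [hT0.1]) (by linarith)
  have up2 := mul_le_of_le_one_right (le_max_right (T 0 - Tstar) 0) he1
  have lo2 := mul_le_of_le_one_right (le_max_right (Tstar - T 0) 0) he1
  have up3 : max (T 0 - Tstar) 0 ≤ |T 0 - Tstar| := max_le (le_abs_self _) (abs_nonneg _)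
  have lo3 : max (Tstar - T 0) 0 ≤ |T 0 - Tstar| :=
    max_le (by rw [abs_sub_comm]; exact le_abs_self _) (abs_nonneg _)
  refine ⟨⟨by linarith, by linarith⟩, abs_le'.mpr ⟨?_, ?_⟩⟩
  · exact up.trans (mul_le_mul_of_nonneg_right up3 he.le)
  · rw [neg_sub]
    exact lo.trans (mul_le_mul_of_nonneg_right lo3 he.le)
end

section
/- Let x, y : [0, ∞) → [0, ∞) be differentiable and suppose there are constants a > 0, c > 0, b ≥ 0, d ≥ 0 with (b + d)² < 4ac such that for all t ≥ 0: x'(t) ≤ −a x(t) + b √(x(t) y(t)) and y'(t) ≤ −c y(t) + d √(x(t) y(t)). Then there exists κ > 0 such that x(t) + y(t) ≤ (x(0) + y(0))·exp(−κ t) for all t ≥ 0. -/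
/-!
With `u = √x`, `v = √y` and `s = b + d`, adding the two inequalities gives
`(x + y)' ≤ -(a u² - s u v + c v²)`, and `s² < 4ac` says exactly that this quadratic form is
positive definite. Hence it dominates `κ (u² + v²)` for a small `κ > 0`
(`exists_rate_le_quadratic`), so `(x + y)' ≤ -κ (x + y)`, and Gronwall's argument concludes:
`(x + y) exp (κ t)` is nonincreasing (`le_mul_exp_of_deriv_le`).
-/

/-- Coercivity of a positive definite binary quadratic form. -/
lemma exists_rate_le_quadratic {a c s : ℝ} (ha : 0 < a) (hc : 0 < c)
    (hdisc : s ^ 2 < 4 * a * c) :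
    ∃ κ > (0 : ℝ), ∀ u v : ℝ, κ * (u ^ 2 + v ^ 2) ≤ a * u ^ 2 - s * (u * v) + c * v ^ 2 := by
  -- With this `κ`, `4 (a - κ) (c - κ) = s² + 4 κ²`: the shifted form is still positive definite.
  obtain ⟨κ, hκ⟩ : ∃ κ, κ = (4 * a * c - s ^ 2) / (4 * (a + c)) := ⟨_, rfl⟩
  have hpos : 0 < κ := by
    rw [hκ]
    exact div_pos (by linarith) (by linarith)
  have hmul : κ * (4 * (a + c)) = 4 * a * c - s ^ 2 := by
    rw [hκ]
    field_simp
  have hlt : 0 < a - κ := by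
    have h : κ < a := by
      rw [hκ, div_lt_iff₀ (by linarith)]
      nlinarith [sq_nonneg s, mul_pos ha ha]
    linarith
  refine ⟨κ, hpos, fun u v => ?_⟩
  have hsq : 4 * (a - κ) * ((a - κ) * u ^ 2 - s * (u * v) + (c - κ) * v ^ 2)
      = (2 * (a - κ) * u - s * v) ^ 2 + 4 * (κ * v) ^ 2 := by
    linear_combination (-v ^ 2) * hmul
  have hform : 0 ≤ (a - κ) * u ^ 2 - s * (u * v) + (c - κ) * v ^ 2 := by
    refine nonneg_of_mul_nonneg_right (a := 4 * (a - κ)) ?_ (by linarith)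
    rw [hsq]
    positivity
  linarith

/-- Gronwall's inequality with a constant rate, for a function differentiable on `[0, ∞)`. -/
lemma le_mul_exp_of_deriv_le {z : ℝ → ℝ} {κ : ℝ}
    (hz : ∀ t ≥ (0 : ℝ), DifferentiableAt ℝ z t)
    (hz' : ∀ t ≥ (0 : ℝ), deriv z t ≤ -κ * z t) {t : ℝ} (ht : 0 ≤ t) :
    z t ≤ z 0 * Real.exp (-κ * t) := by
  have hderiv : ∀ r ≥ (0 : ℝ), HasDerivAt (fun r => z r * Real.exp (κ * r))
      (deriv z r * Real.exp (κ * r) + z r * (Real.exp (κ * r) * κ)) r := fun r hr =>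
    (hz r hr).hasDerivAt.mul (((hasDerivAt_id r).const_mul κ).exp.congr_deriv (by simp))
  have hanti : AntitoneOn (fun r => z r * Real.exp (κ * r)) (Set.Ici 0) := by
    refine antitoneOn_of_deriv_nonpos (convex_Ici 0)
      (fun r hr => (hderiv r hr).continuousAt.continuousWithinAt)
      (fun r hr => (hderiv r (interior_subset hr)).differentiableAt.differentiableWithinAt)
      (fun r hr => ?_)
    rw [(hderiv r (interior_subset hr)).deriv]
    nlinarith [hz' r (interior_subset hr), Real.exp_pos (κ * r)]
  have h : z t * Real.exp (κ * t) ≤ z 0 := by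
    simpa using hanti (Set.mem_Ici.2 le_rfl) (Set.mem_Ici.2 ht) ht
  rwa [neg_mul, Real.exp_neg, ← div_eq_mul_inv, le_div_iff₀ (Real.exp_pos _)]

/-- Coupled Gronwall lemma: if nonnegative differentiable `x, y` satisfy
`x' ≤ -a x + b √(xy)` and `y' ≤ -c y + d √(xy)` with `(b + d)² < 4ac`, then
`x + y` decays exponentially. -/
theorem coupled_gronwall_exponential_decay
    (x y : ℝ → ℝ)
    (hxnn : ∀ t ≥ (0 : ℝ), 0 ≤ x t) (hynn : ∀ t ≥ (0 : ℝ), 0 ≤ y t)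
    (hxdiff : ∀ t ≥ (0 : ℝ), DifferentiableAt ℝ x t)
    (hydiff : ∀ t ≥ (0 : ℝ), DifferentiableAt ℝ y t)
    (a b c d : ℝ) (ha : 0 < a) (hc : 0 < c) (hb : 0 ≤ b) (hd : 0 ≤ d)
    (hdisc : (b + d) ^ 2 < 4 * a * c)
    (hx : ∀ t ≥ (0 : ℝ), deriv x t ≤ -a * x t + b * Real.sqrt (x t * y t))
    (hy : ∀ t ≥ (0 : ℝ), deriv y t ≤ -c * y t + d * Real.sqrt (x t * y t)) :
    ∃ κ > (0 : ℝ), ∀ t ≥ (0 : ℝ),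
      x t + y t ≤ (x 0 + y 0) * Real.exp (-κ * t) := by
  obtain ⟨κ, hκ, hquad⟩ := exists_rate_le_quadratic ha hc hdisc
  refine ⟨κ, hκ, fun t ht => ?_⟩
  refine le_mul_exp_of_deriv_le (z := fun r => x r + y r)
    (fun r hr => (hxdiff r hr).add (hydiff r hr)) (fun r hr => ?_) ht
  rw [deriv_fun_add (hxdiff r hr) (hydiff r hr)]
  have hq := hquad (Real.sqrt (x r)) (Real.sqrt (y r))
  rw [Real.sq_sqrt (hxnn r hr), Real.sq_sqrt (hynn r hr), ← Real.sqrt_mul (hxnn r hr)] at hq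
  linarith [hx r hr, hy r hr]
end

section
/- Assume the slope condition: F : ℝ → ℝ, an interval I = [T_min, T_max] with 0 < T_min, a point T* ∈ (T_min, T_max) with F(T*) = 0, and constants 0 < α ≤ a such that α ≤ (F(T) − F(T*))/(T − T*) ≤ a for all T ∈ I with T ≠ T*. Let γ > 0, let r : [0, τ] → ℝ, and let T : [0, τ] → I be differentiable with T'(t) = −γ (F(T(t)) + r(t)) for all t ∈ [0, τ]. Then for all t ∈ [0, τ]: (i) |T'(t)| ≤ γ ( a |T(t) − T*| + |r(t)| ), and (ii) (d/dt)[(1/2)(T(t) − T*)²] ≤ −αγ (T(t) − T*)² + γ |r(t)| |T(t) − T*|. -/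
/-!
By the slope condition, `F x = s (x - T*)` at each point `x` of the interval, for some secant
slope `s ∈ [α, a]`. Hence `T' = -γ (s (T - T*) + r)`. The upper bound `s ≤ a` and the triangle
inequality give (i); multiplying by `T - T*` and using the lower bound `α ≤ s` gives (ii).
-/

/-- Temperature estimates for the perturbed feedback dynamics
`T'(t) = -γ (F(T(t)) + r(t))` with `T(t)` staying in the interval `I` of the slope
condition: (i) `|T'(t)| ≤ γ (a |T(t) - T*| + |r(t)|)`, and (ii) the derivative of
`(1/2)(T(t) - T*)²` is at most `-αγ (T(t) - T*)² + γ |r(t)| |T(t) - T*|`. -/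
theorem perturbed_feedback_temperature_estimates
    (F : ℝ → ℝ) (Tmin Tmax Tstar α a γ τ : ℝ)
    (hTmin : 0 < Tmin) (h1 : Tmin < Tstar) (h2 : Tstar < Tmax)
    (hF0 : F Tstar = 0) (hα : 0 < α) (hαa : α ≤ a)
    (hslope : ∀ T ∈ Set.Icc Tmin Tmax, T ≠ Tstar →
      α ≤ (F T - F Tstar) / (T - Tstar) ∧ (F T - F Tstar) / (T - Tstar) ≤ a)
    (hγ : 0 < γ)
    (r : ℝ → ℝ) (T : ℝ → ℝ)
    (hTI : ∀ t ∈ Set.Icc (0 : ℝ) τ, T t ∈ Set.Icc Tmin Tmax)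
    (hT : ∀ t ∈ Set.Icc (0 : ℝ) τ, HasDerivAt T (-γ * (F (T t) + r t)) t) :
    ∀ t ∈ Set.Icc (0 : ℝ) τ,
      |deriv T t| ≤ γ * (a * |T t - Tstar| + |r t|) ∧
      deriv (fun u => (1 / 2) * (T u - Tstar) ^ 2) t ≤
        -(α * γ) * (T t - Tstar) ^ 2 + γ * |r t| * |T t - Tstar| := by
  intro t ht
  obtain ⟨s, hsα, hsa, hFs⟩ : ∃ s, α ≤ s ∧ s ≤ a ∧ F (T t) = s * (T t - Tstar) := by
    by_cases h : T t = Tstar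
    · exact ⟨a, hαa, le_rfl, by simp [h, hF0]⟩
    · obtain ⟨hl, hu⟩ := hslope (T t) (hTI t ht) h
      refine ⟨_, hl, hu, ?_⟩
      rw [div_mul_cancel₀ _ (sub_ne_zero.mpr h), hF0, sub_zero]
  have hd := hT t ht
  rw [hFs] at hd
  have hsq : HasDerivAt (fun u => (1 / 2) * (T u - Tstar) ^ 2)
      ((T t - Tstar) * (-γ * (s * (T t - Tstar) + r t))) t := by
    refine (((hd.sub_const Tstar).pow 2).const_mul (1 / 2 : ℝ)).congr_deriv ?_
    push_cast
    ring
  constructor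
  · rw [hd.deriv, abs_mul, abs_neg, abs_of_pos hγ]
    gcongr
    calc |s * (T t - Tstar) + r t| ≤ |s * (T t - Tstar)| + |r t| := abs_add_le _ _
      _ = s * |T t - Tstar| + |r t| := by rw [abs_mul, abs_of_pos (hα.trans_le hsα)]
      _ ≤ a * |T t - Tstar| + |r t| := by gcongr
  · rw [hsq.deriv]
    have hquad : γ * (α * (T t - Tstar) ^ 2) ≤ γ * (s * (T t - Tstar) ^ 2) := by gcongr
    have hcross : γ * -(r t * (T t - Tstar)) ≤ γ * (|r t| * |T t - Tstar|) := by
      rw [← abs_mul]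
      gcongr
      exact neg_le_abs _
    linarith
end
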